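/- Every complete directed graph on n ≥ k + 2Ω(k) vertices (k ≥ 2) whose edges are weighted by elements of Z_k contains a directed cycle whose total edge weight is 0 in Z_k. -/

import Mathlib

/-- Ω(n): number of prime factors of n counted with multiplicity. -/
def bigOmega (n : ℕ) : ℕ := (Nat.primeFactorsList n).length

/-- The weight of a directed cycle given by a list of distinct vertices:
the sum of the weights of its edges (consecutive, including the closing edge). -/
def cycleWeight {V : Type*} {k : ℕ} (w : V → V → ZMod k) (c : List V) : ZMod k :=
  ((c.zip (c.rotate 1)).map fun p => w p.1 p.2).sum

namespace ZC
open scoped Pointwise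
open ArithmeticFunction

/-- Weight of the walk from `a` through `l` to `c`. -/
def pw {V A : Type*} [AddCommGroup A] (w : V → V → A) : V → List V → V → A
  | a, [], c => w a c
  | a, x :: l, c => w a x + pw w x l c

theorem pw_append {V A : Type*} [AddCommGroup A] (w : V → V → A) (a x c : V) (l : List V) :
    pw w a (l ++ [x]) c = pw w a l x + w x c := by
  induction l generalizing a with
  | nil => simp [pw]
  | cons y l ih => simp [pw, ih, add_assoc]

theorem pw_zip {V A : Type*} [AddCommGroup A] (w : V → V → A) (a c : V) (l : List V) :
    (((a :: l).zip (l ++ [c])).map fun p => w p.1 p.2).sum = pw w a l c := by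
  induction l generalizing a with
  | nil => simp [pw]
  | cons y l ih =>
    have := ih y
    simp only [List.cons_append, List.zip_cons_cons, List.map_cons, List.sum_cons, pw] at this ⊢
    rw [this]

theorem pw_congr {V A B : Type*} [AddCommGroup A] [AddCommGroup B] (T : Finset V)
    (w : V → V → A) (w' : V → V → B) (f : B →+ A) (φ : V → A)
    (h : ∀ u ∈ T, ∀ v ∈ T, u ≠ v → f (w' u v) = w u v + φ u - φ v)
    (l : List V) (a c : V) (ha : a ∈ T) (hc : c ∈ T) (hl : ∀ v ∈ l, v ∈ T)
    (hn : (a :: l).Nodup) (hcl : c ∉ l) (hac : a ≠ c) :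
    f (pw w' a l c) = pw w a l c + φ a - φ c := by
  induction l generalizing a with
  | nil => simpa [pw] using h a ha c hc hac
  | cons y l ih =>
    simp only [List.nodup_cons, List.mem_cons, not_or] at hn hcl
    have hy : y ∈ T := hl y (by simp)
    have h1 := ih y hy (fun v hv => hl v (by simp [hv])) (by simp [hn.2]) hcl.2
      (fun e => hcl.1 e.symm)
    simp only [pw, map_add, h1, h a ha y hy hn.1.1]
    abel

theorem pw_congr_cycle {V A B : Type*} [AddCommGroup A] [AddCommGroup B] (T : Finset V)
    (w : V → V → A) (w' : V → V → B) (f : B →+ A) (φ : V → A)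
    (h : ∀ u ∈ T, ∀ v ∈ T, u ≠ v → f (w' u v) = w u v + φ u - φ v)
    (l : List V) (a : V) (hl : ∀ v ∈ a :: l, v ∈ T) (hl0 : l ≠ [])
    (hn : (a :: l).Nodup) :
    f (pw w' a l a) = pw w a l a := by
  cases l with
  | nil => exact absurd rfl hl0
  | cons y l =>
    have ha : a ∈ T := hl a (by simp)
    have hy : y ∈ T := hl y (by simp)
    simp only [List.nodup_cons, List.mem_cons, not_or] at hn
    have h1 := pw_congr T w w' f φ h l y a hy ha (fun v hv => hl v (by simp [hv]))
      (by simp [hn.2]) hn.1.2 (fun e => hn.1.1 e.symm)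
    simp only [pw, map_add, h1, h a ha y hy hn.1.1]
    abel

/-- `r` is the weight of a path from `b` to `c` with interior in `S`. -/
def R {V A : Type*} [AddCommGroup A] (w : V → V → A) (b : V) (S : Finset V) (c : V) (r : A) :
    Prop := ∃ l : List V, l.Nodup ∧ (∀ v ∈ l, v ∈ S) ∧ pw w b l c = r

theorem R_mono {V A : Type*} [AddCommGroup A] {w : V → V → A} {b : V} {S S' : Finset V}
    (h : S ⊆ S') {c : V} {r : A} (hr : R w b S c r) : R w b S' c r := by
  obtain ⟨l, h1, h2, h3⟩ := hr
  exact ⟨l, h1, fun v hv => h (h2 v hv), h3⟩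

theorem R_step {V A : Type*} [AddCommGroup A] {w : V → V → A} {b : V} {S S' : Finset V}
    (h : S ⊆ S') {x : V} (hx : x ∉ S) (hx' : x ∈ S') (c : V) {r : A} (hr : R w b S x r) :
    R w b S' c (w x c + r) := by
  obtain ⟨l, h1, h2, h3⟩ := hr
  refine ⟨l ++ [x], ?_, ?_, ?_⟩
  · rw [List.nodup_append]
    refine ⟨h1, by simp, ?_⟩
    intro a ha y hy
    simp at hy; subst hy
    rintro rfl; exact hx (h2 _ ha)
  · intro v hv
    simp at hv
    rcases hv with hv | rfl
    · exact h (h2 v hv)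
    · exact hx'
  · rw [pw_append, h3, add_comm]

/-- No zero cycle within `T`. -/
def NZ {V A : Type*} [AddCommGroup A] (w : V → V → A) (T : Finset V) : Prop :=
  ∀ a l, (a :: l).Nodup → l ≠ [] → (∀ v ∈ a :: l, v ∈ T) → pw w a l a ≠ 0

theorem finish {V A : Type*} [AddCommGroup A] {w : V → V → A} {T : Finset V} (hNZ : NZ w T)
    {b c : V} {S : Finset V} (hb : b ∈ T) (hc : c ∈ T) (hcb : c ≠ b) (hS : S ⊆ T) (hbS : b ∉ S)
    (hcS : c ∉ S) (h : ∀ r, R w b S c r) : False := by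
  obtain ⟨l, h1, h2, h3⟩ := h (- w c b)
  refine hNZ b (l ++ [c]) ?_ (by simp) ?_ ?_
  · have hcl : c ∉ l := fun h => hcS (h2 _ h)
    have hbl : b ∉ l := fun h => hbS (h2 _ h)
    simp only [List.nodup_cons, List.mem_append, List.mem_singleton, not_or, List.nodup_append]
    refine ⟨⟨hbl, hcb.symm⟩, h1, by simp, ?_⟩
    rintro a ha y rfl rfl
    exact hcl ha
  · intro v hv
    simp at hv
    rcases hv with rfl | hv | rfl
    · exact hb
    · exact hS (h2 v hv)
    · exact hc
  · rw [pw_append, h3]; simp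

theorem dvd_of_le_stab {A : Type*} [AddCommGroup A] [Finite A] [DecidableEq A] (H : AddSubgroup A)
    (G : Finset A) (h : H ≤ AddAction.stabilizer A G) : Nat.card H ∣ G.card := by
  have h1 : (QuotientAddGroup.mk ⁻¹' ((QuotientAddGroup.mk : A → A ⧸ H) '' (G : Set A))) = (G : Set A) := by
    apply Set.Subset.antisymm
    · rintro x ⟨y, hy, hxy⟩
      have h2 : -y + x ∈ H := QuotientAddGroup.eq.1 hxy
      have h3 := (AddAction.mem_stabilizer_finset.1 (h h2) y).2 hy
      simpa [add_comm, add_assoc] using h3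
    · exact Set.subset_preimage_image _ _
  have h2 := Nat.card_congr (QuotientAddGroup.preimageMkEquivAddSubgroupProdSet H
    ((QuotientAddGroup.mk : A → A ⧸ H) '' (G : Set A)))
  rw [h1, Nat.card_prod] at h2
  have h3 : Nat.card (G : Set A) = G.card := by simp
  rw [← h3, h2]
  exact dvd_mul_right _ _

theorem omega_lt {h k : ℕ} (hd : h ∣ k) (hlt : h < k) : cardFactors h + 1 ≤ cardFactors k := by
  obtain ⟨q, rfl⟩ := hd
  have h0 : h ≠ 0 := by rintro rfl; simp at hlt
  have hq : 1 < q := by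
    by_contra hq
    have : q = 0 ∨ q = 1 := by omega
    rcases this with rfl | rfl <;> simp at hlt
  rw [cardFactors_mul h0 (by omega)]
  have := cardFactors_pos_iff_one_lt.2 hq
  omega

/-- Stuck self-maps contain a cycle. -/
theorem cycle_of_map {V A : Type*} [AddCommGroup A] [DecidableEq A] {w : V → V → A}
    {T : Finset V} (hNZ : NZ w T)
    (U : Finset V) (hU : U ⊆ T) (hne : U.Nonempty) (G : V → Finset A) (f : V → V)
    (hf : ∀ x ∈ U, f x ∈ U) (hf' : ∀ x ∈ U, f x ≠ x)
    (hG : ∀ x ∈ U, w x (f x) +ᵥ G x = G (f x)) :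
    ∃ x ∈ U, ∃ h : A, h ≠ 0 ∧ h +ᵥ G x = G x := by
  obtain ⟨x0, hx0⟩ := hne
  have hit : ∀ x ∈ U, ∀ n, f^[n] x ∈ U := by
    intro x hx n
    induction n with
    | zero => simpa
    | succ n ih => rw [Function.iterate_succ_apply']; exact hf _ ih
  have hp : ∃ y ∈ U, ∃ n, 0 < n ∧ f^[n] y = y := by
    have : ¬ Function.Injective (fun n : ℕ => (⟨f^[n] x0, hit x0 hx0 n⟩ : U)) :=
      not_injective_infinite_finite _
    simp only [Function.Injective, not_forall] at this
    obtain ⟨i, j, hij, hne⟩ := this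
    simp only [Subtype.mk.injEq] at hij
    wlog hlt : i < j generalizing i j
    · exact this j i (fun e => hne e.symm) hij.symm (by omega)
    refine ⟨f^[i] x0, hit x0 hx0 i, j - i, by omega, ?_⟩
    rw [← Function.iterate_add_apply, hij]; congr 1; omega
  obtain ⟨y, hy, n, hn, hyn⟩ := hp
  have hper : y ∈ Function.periodicPts f := ⟨n, hn, hyn⟩
  have hpos := Function.minimalPeriod_pos_of_mem_periodicPts hper
  have hm1 : Function.minimalPeriod f y ≠ 1 := by
    intro h
    rw [Function.minimalPeriod_eq_one_iff_isFixedPt] at h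
    exact hf' y hy h
  obtain ⟨N, hN⟩ : ∃ N, Function.minimalPeriod f y = N + 2 := ⟨Function.minimalPeriod f y - 2, by omega⟩
  have hinj := Function.iterate_injOn_Iio_minimalPeriod (f := f) (x := y)
  have hfix : f^[N+2] y = y := by rw [← hN]; exact Function.iterate_minimalPeriod
  have key : ∀ n, ∀ x ∈ U, pw w x (List.iterate f (f x) n) (f^[n+1] x) +ᵥ G x = G (f^[n+1] x) := by
    intro n
    induction n with
    | zero => intro x hx; simpa [pw, List.iterate] using hG x hx
    | succ n ih =>
      intro x hx
      have := ih (f x) (hf x hx)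
      simp only [List.iterate, pw]
      rw [Function.iterate_succ_apply, ← this, ← hG x hx, vadd_vadd]
      congr 1
      exact add_comm _ _
  refine ⟨y, hy, pw w y (List.iterate f (f y) (N+1)) y, ?_, ?_⟩
  · apply hNZ
    · change (List.iterate f y (N+2)).Nodup
      rw [← List.range_map_iterate]
      apply List.Nodup.map_on _ List.nodup_range
      intro i hi j hj hij
      simp at hi hj
      exact hinj (by simp [hN]; omega) (by simp [hN]; omega) hij
    · simp [List.iterate]
    · intro v hv
      change v ∈ List.iterate f y (N+2) at hv
      rw [List.mem_iterate] at hv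
      obtain ⟨m, _, rfl⟩ := hv
      exact hU (hit y hy m)
  · have := key (N+1) y hy
    rwa [hfix] at this

/-- Remaining vertices. -/
def U {V : Type*} [DecidableEq V] (T : Finset V) (b : V) (S : Finset V) : Finset V :=
  (T.erase b) \ S

theorem mem_U {V : Type*} [DecidableEq V] {T : Finset V} {b : V} {S : Finset V} {c : V} :
    c ∈ U T b S ↔ c ∈ T ∧ c ≠ b ∧ c ∉ S := by
  simp only [U, Finset.mem_sdiff, Finset.mem_erase]; tauto

theorem card_U {V : Type*} [DecidableEq V] {T : Finset V} {b : V} {S : Finset V}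
    (hb : b ∈ T) (hS : S ⊆ T) (hbS : b ∉ S) : (U T b S).card + S.card + 1 = T.card := by
  have h1 : S ⊆ T.erase b := fun v hv => Finset.mem_erase.2 ⟨fun e => hbS (e ▸ hv), hS hv⟩
  have h2 := Finset.card_sdiff_add_card_eq_card h1
  have h3 := Finset.card_erase_add_one hb
  unfold U; omega

/-- Admissible families. -/
def Adm {V A : Type*} [AddCommGroup A] [DecidableEq V] (w : V → V → A) (T : Finset V) (b : V)
    (S : Finset V) (G : V → Finset A) : Prop :=
  ∀ c ∈ U T b S, ∀ r ∈ G c, R w b S c r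

/-- Extension of a family by a set of vertices. -/
def ext {V A : Type*} [AddCommGroup A] [DecidableEq V] [DecidableEq A] (w : V → V → A)
    (G : V → Finset A) (X : Finset V) (c : V) : Finset A :=
  G c ∪ X.biUnion (fun x => w x c +ᵥ G x) ∪
    X.biUnion (fun x => (X.erase x).biUnion fun y => (w y c + w x y) +ᵥ G x)

theorem stab_vadd {A : Type*} [AddCommGroup A] [DecidableEq A] (a : A) (G : Finset A) :
    AddAction.stabilizer A (a +ᵥ G) = AddAction.stabilizer A G := by
  ext g
  rw [AddAction.mem_stabilizer_iff, AddAction.mem_stabilizer_iff, vadd_vadd, add_comm, ← vadd_vadd,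
    vadd_left_cancel_iff]

theorem stab_union {A : Type*} [AddCommGroup A] [DecidableEq A] (H : AddSubgroup A) {G G' : Finset A}
    (h : H ≤ AddAction.stabilizer A G) (h' : H ≤ AddAction.stabilizer A G') :
    H ≤ AddAction.stabilizer A (G ∪ G') := by
  intro a ha
  rw [AddAction.mem_stabilizer_iff, Finset.vadd_finset_union, h ha, h' ha]

theorem stab_biUnion {A V : Type*} [AddCommGroup A] [DecidableEq A] (H : AddSubgroup A)
    {X : Finset V} {G : V → Finset A}
    (h : ∀ x ∈ X, H ≤ AddAction.stabilizer A (G x)) :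
    H ≤ AddAction.stabilizer A (X.biUnion G) := by
  intro a ha
  rw [AddAction.mem_stabilizer_finset']
  intro r hr
  rw [Finset.mem_biUnion] at hr ⊢
  obtain ⟨x, hx, hr⟩ := hr
  exact ⟨x, hx, AddAction.mem_stabilizer_finset'.1 (h x hx ha) hr⟩

theorem adm_reset {V A : Type*} [AddCommGroup A] [DecidableEq V] [DecidableEq A] {w : V → V → A}
    {T : Finset V} {b : V} {S : Finset V} {G : V → Finset A} (h : Adm w T b S G) {x : V}
    (hx : x ∈ U T b S) : Adm w T b (insert x S) (fun c => w x c +ᵥ G x) := by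
  intro c _ r hr
  obtain ⟨r', hr', rfl⟩ := Finset.mem_vadd_finset.1 hr
  exact R_step (Finset.subset_insert _ _) (mem_U.1 hx).2.2 (Finset.mem_insert_self _ _) c
    (h x hx r' hr')

theorem adm_ext {V A : Type*} [AddCommGroup A] [DecidableEq V] [DecidableEq A] {w : V → V → A}
    {T : Finset V} {b : V} {S : Finset V} {G : V → Finset A} (h : Adm w T b S G) {X : Finset V}
    (hX : X ⊆ U T b S) : Adm w T b (S ∪ X) (ext w G X) := by
  intro c hc r hr
  have hc' : c ∈ U T b S := by
    rw [mem_U] at hc ⊢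
    exact ⟨hc.1, hc.2.1, fun h => hc.2.2 (Finset.mem_union_left _ h)⟩
  simp only [ext, Finset.mem_union, Finset.mem_biUnion, Finset.mem_erase] at hr
  rcases hr with (hr | ⟨x, hx, hr⟩) | ⟨x, hx, y, ⟨hyx, hy⟩, hr⟩
  · exact R_mono Finset.subset_union_left (h c hc' r hr)
  · obtain ⟨r', hr', rfl⟩ := Finset.mem_vadd_finset.1 hr
    exact R_step Finset.subset_union_left (mem_U.1 (hX hx)).2.2 (Finset.mem_union_right _ hx) c
      (h x (hX hx) r' hr')
  · obtain ⟨r', hr', rfl⟩ := Finset.mem_vadd_finset.1 hr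
    have h1 : R w b (insert x S) y (w x y + r') :=
      R_step (Finset.subset_insert _ _) (mem_U.1 (hX hx)).2.2 (Finset.mem_insert_self _ _) y
        (h x (hX hx) r' hr')
    have h2 : insert x S ⊆ S ∪ X := by
      intro v hv
      rw [Finset.mem_insert] at hv
      rcases hv with rfl | hv
      · exact Finset.mem_union_right _ hx
      · exact Finset.mem_union_left _ hv
    have h3 := R_step h2 (x := y) (by
      rw [Finset.mem_insert, not_or]; exact ⟨hyx, (mem_U.1 (hX hy)).2.2⟩)
      (Finset.mem_union_right _ hy) c h1
    rw [vadd_eq_add, add_assoc]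
    exact h3

theorem ext_step {V A : Type*} [AddCommGroup A] [Finite A] [DecidableEq V] [DecidableEq A]
    {w : V → V → A} {T : Finset V} {b : V} {S : Finset V} {G : V → Finset A}
    {X : Finset V} (hX : X ⊆ U T b S) {H : AddSubgroup A} {m : ℕ}
    (hH : ∀ c ∈ U T b S, H ≤ AddAction.stabilizer A (G c)) (hm : Nat.card H ∣ m)
    (hG : ∀ c ∈ U T b S, m ≤ (G c).card) :
    (∀ c ∈ U T b (S ∪ X), H ≤ AddAction.stabilizer A (ext w G X c) ∧
      m + Nat.card H ≤ (ext w G X c).card) ∨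
    ∃ c ∈ U T b (S ∪ X), (∀ x ∈ X, w x c +ᵥ G x = G c) ∧
      (∀ x ∈ X, ∀ y ∈ X, x ≠ y → w x y +ᵥ G x = G y) ∧ ∀ x ∈ X, (G x).card = m := by
  have hsub : ∀ c ∈ U T b (S ∪ X), c ∈ U T b S := by
    intro c hc
    rw [mem_U] at hc ⊢
    exact ⟨hc.1, hc.2.1, fun h => hc.2.2 (Finset.mem_union_left _ h)⟩
  have hst : ∀ c ∈ U T b (S ∪ X), H ≤ AddAction.stabilizer A (ext w G X c) := by
    intro c hc
    refine stab_union _ (stab_union _ (hH c (hsub c hc)) (stab_biUnion _ ?_)) (stab_biUnion _ ?_)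
    · intro x hx; rw [stab_vadd]; exact hH x (hX hx)
    · intro x hx
      refine stab_biUnion _ ?_
      intro y _; rw [stab_vadd]; exact hH x (hX hx)
  by_cases hall : ∀ c ∈ U T b (S ∪ X), m + Nat.card H ≤ (ext w G X c).card
  · exact Or.inl fun c hc => ⟨hst c hc, hall c hc⟩
  right
  push Not at hall
  obtain ⟨c, hc, hlt⟩ := hall
  have hsubG : G c ⊆ ext w G X c := fun r hr =>
    Finset.mem_union_left _ (Finset.mem_union_left _ hr)
  have hcard : (ext w G X c).card = m := by
    have h1 := dvd_of_le_stab H _ (hst c hc)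
    have h2 := (hG c (hsub c hc)).trans (Finset.card_le_card hsubG)
    have h3 : Nat.card H ∣ (ext w G X c).card - m := Nat.dvd_sub h1 hm
    have h4 := Nat.eq_zero_of_dvd_of_lt h3 (by omega)
    omega
  have heq : ∀ s : Finset A, s ⊆ ext w G X c → m ≤ s.card → s = ext w G X c := fun s hs h =>
    Finset.eq_of_subset_of_card_le hs (by omega)
  have hGc : G c = ext w G X c := heq _ hsubG (hG c (hsub c hc))
  have h1 : ∀ x ∈ X, w x c +ᵥ G x = G c := by
    intro x hx
    rw [hGc]
    apply heq
    · intro r hr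
      refine Finset.mem_union_left _ (Finset.mem_union_right _ (Finset.mem_biUnion.2 ⟨x, hx, hr⟩))
    · rw [Finset.card_vadd_finset]; exact hG x (hX hx)
  refine ⟨c, hc, h1, ?_, ?_⟩
  · intro x hx y hy hxy
    have h2 : (w y c + w x y) +ᵥ G x = G c := by
      rw [hGc]
      apply heq
      · intro r hr
        exact Finset.mem_union_right _ (Finset.mem_biUnion.2 ⟨x, hx,
          Finset.mem_biUnion.2 ⟨y, Finset.mem_erase.2 ⟨hxy.symm, hy⟩, hr⟩⟩)
      · rw [Finset.card_vadd_finset]; exact hG x (hX hx)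
    rw [← h1 y hy, ← vadd_vadd, vadd_left_cancel_iff] at h2
    exact h2
  · intro x hx
    rw [← Finset.card_vadd_finset (w x c), h1 x hx, hGc, hcard]

/-- The stuck relation. -/
def Stuck {V A : Type*} [AddCommGroup A] [DecidableEq A] (w : V → V → A)
    (G : V → Finset A) (X : Finset V) (c : V) : Prop :=
  (∀ x ∈ X, w x c +ᵥ G x = G c) ∧ (∀ x ∈ X, ∀ y ∈ X, x ≠ y → w x y +ᵥ G x = G y)

theorem NZ.two {V A : Type*} [AddCommGroup A] {w : V → V → A} {T : Finset V} (h : NZ w T)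
    {x y : V} (hx : x ∈ T) (hy : y ∈ T) (hxy : x ≠ y) : w x y + w y x ≠ 0 := by
  have := h x [y] (by simp [hxy]) (by simp) (by simp [hx, hy])
  simpa [pw] using this

theorem NZ.three {V A : Type*} [AddCommGroup A] {w : V → V → A} {T : Finset V} (h : NZ w T)
    {x y z : V} (hx : x ∈ T) (hy : y ∈ T) (hz : z ∈ T) (hxy : x ≠ y) (hxz : x ≠ z) (hyz : y ≠ z) :
    w x y + w y z + w z x ≠ 0 := by
  have := h x [y, z] (by simp [hxy, hxz, hyz]) (by simp) (by simp [hx, hy, hz])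
  simpa [pw, add_assoc] using this

theorem chooseX {V A : Type*} [AddCommGroup A] [Finite A] [DecidableEq V] [DecidableEq A]
    {w : V → V → A} {T : Finset V} (hNZ : NZ w T) {W : Finset V} (hW : W ⊆ T) (hW2 : 2 ≤ W.card)
    (H : AddSubgroup A) (hH : 2 ≤ Nat.card H)
    (hnot : ¬ ((∀ x ∈ W, ∀ y ∈ W, x ≠ y → w x y + w y x ∈ H) ∧
      ∀ x ∈ W, ∀ y ∈ W, ∀ z ∈ W, x ≠ y → x ≠ z → y ≠ z → w x y + w y z + w z x ∈ H)) :
    ∃ X ⊆ W, X.card ≤ 3 ∧ X.card ≤ Nat.card H ∧ ∃ x ∈ X, ∀ (G : V → Finset A), ∀ c ∈ W, c ∉ X →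
      Stuck w G X c → AddAction.stabilizer A (G x) ≠ H := by
  by_cases h2 : ∀ x ∈ W, ∀ y ∈ W, x ≠ y → w x y + w y x ∈ H
  · by_cases hc2 : Nat.card H = 2
    · obtain ⟨x, hx, y, hy, hxy⟩ := Finset.one_lt_card.1 hW2
      refine ⟨{x, y}, by intro v hv; simp at hv; rcases hv with rfl | rfl <;> assumption,
        Finset.card_le_two.trans (by omega), Finset.card_le_two.trans (by omega), x, by simp, ?_⟩
      intro G c hc hcX ⟨hs1, hs2⟩ hst
      simp only [Finset.mem_insert, Finset.mem_singleton, not_or] at hcX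
      have e1 := hs1 x (by simp)
      have e2 := hs1 y (by simp)
      have e3 := hs2 x (by simp) y (by simp) hxy
      have m0 : - w x c + (w y c + w x y) ∈ H := by
        rw [← hst, AddAction.mem_stabilizer_iff, ← vadd_vadd, ← vadd_vadd, e3, e2, ← e1,
          neg_vadd_vadd]
      have a1 := h2 x hx y hy hxy
      have a2 := h2 x hx c hc (Ne.symm hcX.1)
      have a3 := h2 y hy c hc (Ne.symm hcX.2)
      have t1 : w x y + w y c + w c x ∈ H := by
        have := H.add_mem m0 a2
        convert this using 1; abel
      have t2 : w x c + w c y + w y x ∈ H := by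
        have := H.sub_mem (H.add_mem (H.add_mem a1 a2) a3) t1
        convert this using 1; abel
      have n1 := hNZ.two (hW hx) (hW hy) hxy
      have n2 := hNZ.two (hW hx) (hW hc) (Ne.symm hcX.1)
      have n3 := hNZ.two (hW hy) (hW hc) (Ne.symm hcX.2)
      have n4 := hNZ.three (hW hx) (hW hy) (hW hc) hxy (Ne.symm hcX.1) (Ne.symm hcX.2)
      have n5 := hNZ.three (hW hx) (hW hc) (hW hy) (Ne.symm hcX.1) hxy hcX.2
      have huniq : ∀ u ∈ H, u ≠ 0 → u = w x y + w y x := by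
        intro u hu hu0
        obtain ⟨v, _, hv⟩ := (Nat.card_eq_two_iff' (0 : H)).1 hc2
        have q1 := hv ⟨u, hu⟩ (by simpa [Subtype.ext_iff] using hu0)
        have q2 := hv ⟨_, a1⟩ (by simpa [Subtype.ext_iff] using n1)
        have := q1.trans q2.symm
        simpa [Subtype.ext_iff] using this
      have f2 := huniq _ a2 n2
      have f3 := huniq _ a3 n3
      have f4 := huniq _ t1 n4
      have f5 := huniq _ t2 n5
      apply n1
      have : (w x y + w y c + w c x) + (w x c + w c y + w y x)
        = (w x y + w y x) + (w x c + w c x) + (w y c + w c y) := by abel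
      rw [f2, f3, f4, f5] at this
      simpa using this
    · have : ∃ x ∈ W, ∃ y ∈ W, ∃ z ∈ W, x ≠ y ∧ x ≠ z ∧ y ≠ z ∧ w x y + w y z + w z x ∉ H := by
        by_contra hcon
        push Not at hcon
        exact hnot ⟨h2, fun x hx y hy z hz h1 h2 h3 => hcon x hx y hy z hz h1 h2 h3⟩
      obtain ⟨x, hx, y, hy, z, hz, hxy, hxz, hyz, hn⟩ := this
      refine ⟨{x, y, z}, by intro v hv; simp at hv; rcases hv with rfl | rfl | rfl <;> assumption,
        Finset.card_le_three, Finset.card_le_three.trans (by omega), x, by simp, ?_⟩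
      intro G c hc hcX ⟨hs1, hs2⟩ hst
      apply hn
      rw [← hst, AddAction.mem_stabilizer_iff]
      have e1 := hs2 x (by simp) y (by simp) hxy
      have e2 := hs2 y (by simp) z (by simp) hyz
      have e3 := hs2 z (by simp) x (by simp) hxz.symm
      have : w x y + w y z + w z x = w z x + (w y z + w x y) := by abel
      rw [this, ← vadd_vadd, ← vadd_vadd, e1, e2, e3]
  · push Not at h2
    obtain ⟨x, hx, y, hy, hxy, hn⟩ := h2
    refine ⟨{x, y}, by intro v hv; simp at hv; rcases hv with rfl | rfl <;> assumption,
        Finset.card_le_two.trans (by omega), Finset.card_le_two.trans (by omega), x, by simp, ?_⟩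
    intro G c hc hcX ⟨hs1, hs2⟩ hst
    apply hn
    rw [← hst, AddAction.mem_stabilizer_iff, add_comm, ← vadd_vadd,
      hs2 x (by simp) y (by simp) hxy, hs2 y (by simp) x (by simp) hxy.symm]

theorem card_gap {A : Type*} [AddCommGroup A] [Finite A] (H : AddSubgroup A) {m : ℕ}
    (hm : Nat.card H ∣ m) (hlt : m < Nat.card A) : m + Nat.card H ≤ Nat.card A := by
  have h1 : Nat.card H ∣ Nat.card A - m := Nat.dvd_sub H.card_addSubgroup_dvd_card hm
  have := Nat.le_of_dvd (by omega) h1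
  omega

theorem full {A : Type*} [Finite A] (G : Finset A) (h : Nat.card A ≤ G.card) (r : A) : r ∈ G := by
  haveI := Fintype.ofFinite A
  rw [Nat.card_eq_fintype_card] at h
  have := Finset.eq_univ_of_card G (le_antisymm (Finset.card_le_univ _) h)
  simp [this]

theorem stage2 {V A : Type*} [AddCommGroup A] [Finite A] [DecidableEq V] [DecidableEq A]
    {w : V → V → A} {T : Finset V} (hNZ : NZ w T) {b : V} (hb : b ∈ T)
    (hT : Nat.card A + 2 * cardFactors (Nat.card A) ≤ T.card)
    (hIH : ∀ H : AddSubgroup A, Nat.card H < Nat.card A → 2 ≤ Nat.card H → ∀ W ⊆ T,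
      Nat.card H + 2 * cardFactors (Nat.card H) ≤ W.card →
      (∀ x ∈ W, ∀ y ∈ W, x ≠ y → w x y + w y x ∈ H) →
      (∀ x ∈ W, ∀ y ∈ W, ∀ z ∈ W, x ≠ y → x ≠ z → y ≠ z → w x y + w y z + w z x ∈ H) → False)
    (N : ℕ) : ∀ (S : Finset V) (G : V → Finset A) (m e : ℕ) (H : AddSubgroup A),
      (U T b S).card ≤ N → S ⊆ T → b ∉ S → Adm w T b S G → (U T b S).Nonempty →
      2 ≤ Nat.card H → (∀ c ∈ U T b S, H ≤ AddAction.stabilizer A (G c)) → Nat.card H ∣ m →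
      (∀ c ∈ U T b S, m ≤ (G c).card) → 1 ≤ m → S.card + 1 ≤ m + e →
      (e ≤ 1 ∨ (e ≤ 2 ∧ 4 ≤ Nat.card H ∧ ∀ c ∈ U T b S, AddAction.stabilizer A (G c) = H)) →
      False := by
  induction N with
  | zero =>
    intro S G m e H hN _ _ _ hne
    have := Finset.card_pos.2 hne
    omega
  | succ N ih =>
    intro S G m e H hN hS hbS hA hne hH2 hst hdvd hm hm1 hSc he
    by_cases hmk : Nat.card A ≤ m
    · obtain ⟨c, hc⟩ := hne
      have hc' := mem_U.1 hc
      exact finish hNZ hb hc'.1 hc'.2.1 hS hbS hc'.2.2 fun r =>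
        hA c hc r (full _ (hmk.trans (hm c hc)) r)
    push Not at hmk
    have hgap := card_gap H hdvd hmk
    have hHk : Nat.card H < Nat.card A ∨ Nat.card H = Nat.card A := by
      have := Nat.le_of_dvd Nat.card_pos H.card_addSubgroup_dvd_card
      omega
    rcases hHk with hHk | hHk
    swap
    · -- H is everything
      omega
    have hOm := omega_lt H.card_addSubgroup_dvd_card hHk
    have hOm1 : 0 < cardFactors (Nat.card H) := cardFactors_pos_iff_one_lt.2 hH2
    have hUc := card_U hb hS hbS
    have he2 : e ≤ 2 := by rcases he with h | h <;> omega
    have hUT : U T b S ⊆ T := fun v hv => (mem_U.1 hv).1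
    obtain ⟨X, hXU, hX3, hXH, x, hxX, hstab⟩ := chooseX hNZ hUT (by omega) H hH2
      (fun hcon => hIH H hHk hH2 _ hUT (by omega) hcon.1 hcon.2)
    have hXdisj : Disjoint S X := by
      rw [Finset.disjoint_right]
      intro v hv; exact (mem_U.1 (hXU hv)).2.2
    rcases ext_step (w := w) hXU hst hdvd hm with hgrow | ⟨c, hc, hs1, hs2, hs3⟩
    · have hS' : S ∪ X ⊆ T := Finset.union_subset hS (hXU.trans hUT)
      have hbS' : b ∉ S ∪ X := by
        rw [Finset.mem_union, not_or]
        exact ⟨hbS, fun h => (mem_U.1 (hXU h)).2.1 rfl⟩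
      have hcU := Finset.card_union_of_disjoint hXdisj
      have hUc' := card_U hb hS' hbS'
      have hXpos := Finset.card_pos.2 ⟨x, hxX⟩
      refine ih (S ∪ X) (ext w G X) (m + Nat.card H) 1 H (by omega) hS' hbS' (adm_ext hA hXU)
        (Finset.card_pos.1 (by omega)) hH2 (fun c hc => (hgrow c hc).1)
        ((Nat.dvd_add_right hdvd).2 dvd_rfl) (fun c hc => (hgrow c hc).2) (by omega) ?_ (Or.inl le_rfl)
      rw [hcU]
      rcases he with h | h <;> omega
    · have hc1 := mem_U.1 hc
      rw [Finset.mem_union, not_or] at hc1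
      have hcU : c ∈ U T b S := mem_U.2 ⟨hc1.1, hc1.2.1, hc1.2.2.1⟩
      have hne' := hstab G c hcU hc1.2.2.2 ⟨hs1, hs2⟩
      have hxU := hXU hxX
      have hxU' := mem_U.1 hxU
      have he1 : e ≤ 1 := by
        rcases he with h | h
        · exact h
        · exact absurd (h.2.2 x hxU) hne'
      have hlt : H < AddAction.stabilizer A (G x) := lt_of_le_of_ne (hst x hxU) hne'.symm
      have hcard4 : 4 ≤ Nat.card (AddAction.stabilizer A (G x)) := by
        obtain ⟨q, hq⟩ := AddSubgroup.card_dvd_of_le hlt.le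
        have hq1 : q ≠ 1 := by
          rintro rfl
          exact hne' (AddSubgroup.eq_of_le_of_card_ge hlt.le (by omega)).symm
        have hq0 : q ≠ 0 := by
          rintro rfl
          have := Nat.card_pos (α := AddAction.stabilizer A (G x))
          omega
        have : 2 ≤ q := by omega
        rw [hq]
        nlinarith
      have hS' : insert x S ⊆ T := Finset.insert_subset hxU'.1 hS
      have hbS' : b ∉ insert x S := by
        rw [Finset.mem_insert, not_or]; exact ⟨hxU'.2.1.symm, hbS⟩
      have hUc' := card_U hb hS' hbS'
      have hci := Finset.card_insert_of_notMem hxU'.2.2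
      have hcx : c ≠ x := fun e => hc1.2.2.2 (e ▸ hxX)
      refine ih (insert x S) (fun c => w x c +ᵥ G x) m (e + 1) _ (by omega) hS' hbS'
        (adm_reset hA hxU) ⟨c, mem_U.2 ⟨hc1.1, hc1.2.1, ?_⟩⟩ (by omega)
        (fun c _ => (stab_vadd _ _).ge) ?_ ?_ (by omega) (by omega)
        (Or.inr ⟨by omega, hcard4, fun c _ => stab_vadd _ _⟩)
      · rw [Finset.mem_insert, not_or]; exact ⟨hcx, hc1.2.2.1⟩
      · rw [← hs3 x hxX]; exact dvd_of_le_stab _ _ le_rfl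
      · intro c _
        rw [Finset.card_vadd_finset, hs3 x hxX]

theorem stage1 {V A : Type*} [AddCommGroup A] [Finite A] [DecidableEq V] [DecidableEq A]
    {w : V → V → A} {T : Finset V} (hNZ : NZ w T) {b : V} (hb : b ∈ T) (hA2 : 2 ≤ Nat.card A)
    (hT : Nat.card A + 2 * cardFactors (Nat.card A) ≤ T.card)
    (hIH : ∀ H : AddSubgroup A, Nat.card H < Nat.card A → 2 ≤ Nat.card H → ∀ W ⊆ T,
      Nat.card H + 2 * cardFactors (Nat.card H) ≤ W.card →
      (∀ x ∈ W, ∀ y ∈ W, x ≠ y → w x y + w y x ∈ H) →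
      (∀ x ∈ W, ∀ y ∈ W, ∀ z ∈ W, x ≠ y → x ≠ z → y ≠ z → w x y + w y z + w z x ∈ H) → False)
    (N : ℕ) : ∀ (S : Finset V) (G : V → Finset A) (m : ℕ),
      (U T b S).card ≤ N → S ⊆ T → b ∉ S → Adm w T b S G → (U T b S).Nonempty →
      (∀ c ∈ U T b S, m ≤ (G c).card) → S.card + 1 ≤ m → False := by
  induction N with
  | zero =>
    intro S G m hN _ _ _ hne
    have := Finset.card_pos.2 hne
    omega
  | succ N ih =>
    intro S G m hN hS hbS hA hne hm hSc
    by_cases hmk : Nat.card A ≤ m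
    · obtain ⟨c, hc⟩ := hne
      have hc' := mem_U.1 hc
      exact finish hNZ hb hc'.1 hc'.2.1 hS hbS hc'.2.2 fun r =>
        hA c hc r (full _ (hmk.trans (hm c hc)) r)
    push Not at hmk
    have hOm1 : 0 < cardFactors (Nat.card A) := cardFactors_pos_iff_one_lt.2 hA2
    have hUc := card_U hb hS hbS
    have hUT : U T b S ⊆ T := fun v hv => (mem_U.1 hv).1
    have hbot : Nat.card (⊥ : AddSubgroup A) = 1 := by simp
    have hstep := fun x (hx : x ∈ U T b S) =>
      ext_step (w := w) (X := {x}) (Finset.singleton_subset_iff.2 hx) (H := ⊥) (m := m)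
        (fun c _ => bot_le) (by rw [hbot]; exact one_dvd _) hm
    have hins : ∀ x ∈ U T b S, insert x S ⊆ T ∧ b ∉ insert x S ∧
        (insert x S).card = S.card + 1 := by
      intro x hx
      have hx' := mem_U.1 hx
      exact ⟨Finset.insert_subset hx'.1 hS,
        by rw [Finset.mem_insert, not_or]; exact ⟨hx'.2.1.symm, hbS⟩,
        Finset.card_insert_of_notMem hx'.2.2⟩
    have hun : ∀ x, S ∪ {x} = insert x S := by
      intro x; ext v; simp [or_comm]
    by_cases hex : ∃ x ∈ U T b S, ∀ c ∈ U T b (S ∪ {x}), m + 1 ≤ (ext w G {x} c).card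
    · obtain ⟨x, hx, hg⟩ := hex
      obtain ⟨h1, h2, h3⟩ := hins x hx
      have hUc' := card_U hb h1 h2
      rw [← hun] at h1 h2 h3 hUc'
      exact ih (S ∪ {x}) (ext w G {x}) (m + 1) (by omega) h1 h2
        (adm_ext hA (Finset.singleton_subset_iff.2 hx)) (Finset.card_pos.1 (by omega)) hg (by omega)
    push Not at hex
    have hf : ∀ x, ∃ c, x ∈ U T b S → c ∈ U T b S ∧ c ≠ x ∧ w x c +ᵥ G x = G c ∧ (G x).card = m := by
      intro x
      by_cases hx : x ∈ U T b S
      · obtain ⟨c0, hc0, hlt⟩ := hex x hx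
        rcases hstep x hx with h | ⟨c, hc, h1, _, h3⟩
        · have := (h c0 hc0).2
          omega
        · refine ⟨c, fun _ => ?_⟩
          have hc1 := mem_U.1 hc
          rw [Finset.mem_union, not_or, Finset.mem_singleton] at hc1
          exact ⟨mem_U.2 ⟨hc1.1, hc1.2.1, hc1.2.2.1⟩, hc1.2.2.2, h1 x (by simp), h3 x (by simp)⟩
      · exact ⟨x, fun h => absurd h hx⟩
    choose f hf using hf
    obtain ⟨x, hx, h, h0, hst⟩ := cycle_of_map hNZ (U T b S) hUT hne G f (fun x hx => (hf x hx).1)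
      (fun x hx => (hf x hx).2.1) (fun x hx => (hf x hx).2.2.1)
    obtain ⟨h1, h2, h3⟩ := hins x hx
    have hUc' := card_U hb h1 h2
    have hcm := (hf x hx).2.2.2
    refine stage2 hNZ hb hT hIH _ (insert x S) (fun c => w x c +ᵥ G x) m 1
      (AddAction.stabilizer A (G x)) le_rfl h1 h2 (adm_reset hA hx) (Finset.card_pos.1 (by omega))
      ?_ (fun c _ => (stab_vadd _ _).ge) ?_ ?_ (by omega) (by omega) (Or.inl le_rfl)
    · have hnb : AddAction.stabilizer A (G x) ≠ ⊥ := by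
        intro hbt
        have : h ∈ AddAction.stabilizer A (G x) := hst
        rw [hbt, AddSubgroup.mem_bot] at this
        exact h0 this
      exact (AddSubgroup.one_lt_card_iff_ne_bot _).2 hnb
    · rw [← hcm]; exact dvd_of_le_stab _ _ le_rfl
    · intro c _
      rw [Finset.card_vadd_finset, hcm]

theorem main_aux {V : Type*} [DecidableEq V] (n : ℕ) : ∀ (A : Type) [AddCommGroup A] [Finite A]
    (_ : Nat.card A = n) (_ : 2 ≤ n) (w : V → V → A) (T : Finset V)
    (_ : n + 2 * cardFactors n ≤ T.card), ¬ NZ w T := by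
  induction n using Nat.strong_induction_on with
  | _ n ih =>
    intro A _ _ hn hn2 w T hT hNZ
    classical
    subst hn
    obtain ⟨b, hb⟩ : T.Nonempty := Finset.card_pos.1 (by omega)
    have hIH : ∀ H : AddSubgroup A, Nat.card H < Nat.card A → 2 ≤ Nat.card H → ∀ W ⊆ T,
      Nat.card H + 2 * cardFactors (Nat.card H) ≤ W.card →
      (∀ x ∈ W, ∀ y ∈ W, x ≠ y → w x y + w y x ∈ H) →
      (∀ x ∈ W, ∀ y ∈ W, ∀ z ∈ W, x ≠ y → x ≠ z → y ≠ z → w x y + w y z + w z x ∈ H) →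
      False := by
      intro H hlt hH2 W hWT hWc h2 h3
      obtain ⟨v0, hv0⟩ : W.Nonempty := Finset.card_pos.1 (by omega)
      let φ : V → A := fun v => if v = v0 then 0 else w v0 v
      have hmem : ∀ u ∈ W, ∀ v ∈ W, u ≠ v → w u v + φ u - φ v ∈ H := by
        intro u hu v hv huv
        by_cases hu0 : u = v0
        · subst hu0
          simp [φ, huv.symm]
        · by_cases hv0' : v = v0
          · subst hv0'
            simpa [φ, hu0] using h2 u hu v hv huv
          · simp only [φ, hu0, hv0', if_false]
            have t := h3 v0 hv0 u hu v hv (Ne.symm hu0) (Ne.symm hv0') huv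
            have s := h2 v0 hv0 v hv (Ne.symm hv0')
            convert H.sub_mem t s using 1
            abel
      let w' : V → V → H := fun u v =>
        if h : w u v + φ u - φ v ∈ H then ⟨_, h⟩ else 0
      have hw' : ∀ u ∈ W, ∀ v ∈ W, u ≠ v → H.subtype (w' u v) = w u v + φ u - φ v := by
        intro u hu v hv huv
        simp [w', hmem u hu v hv huv]
      refine ih (Nat.card H) hlt H rfl hH2 w' W hWc ?_
      intro a l hnd hl hsub hz
      refine hNZ a l hnd hl (fun v hv => hWT (hsub v hv)) ?_
      rw [← pw_congr_cycle W w w' H.subtype φ hw' l a hsub hl hnd, hz, _root_.map_zero]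
    have hUc := card_U (S := ∅) hb (Finset.empty_subset _) (by simp)
    refine stage1 hNZ hb hn2 hT hIH _ ∅ (fun c => {w b c}) 1 le_rfl (Finset.empty_subset _)
      (by simp) ?_ (Finset.card_pos.1 ?_) (by simp) (by simp)
    · intro c _ r hr
      rw [Finset.mem_singleton] at hr
      exact ⟨[], by simp, by simp, by simp [pw, hr]⟩
    · have hOm1 : 0 < cardFactors (Nat.card A) := cardFactors_pos_iff_one_lt.2 hn2
      simp at hUc
      omega

end ZC

theorem zero_cycle_of_complete_digraph (k : ℕ) (hk : 2 ≤ k)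
    (V : Type*) [Fintype V] (hV : k + 2 * bigOmega k ≤ Fintype.card V)
    (w : V → V → ZMod k) :
    ∃ c : List V, c.Nodup ∧ 2 ≤ c.length ∧ cycleWeight w c = 0 := by
  classical
  by_contra hcon
  haveI : NeZero k := ⟨by omega⟩
  refine ZC.main_aux k (ZMod k) (Nat.card_zmod k) hk w Finset.univ ?_ ?_
  · rw [Finset.card_univ]
    exact hV
  · intro a l hnd hl _ hz
    apply hcon
    refine ⟨a :: l, hnd, ?_, ?_⟩
    · have := List.length_pos_iff.2 hl
      simp; omega
    · unfold cycleWeight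
      rw [List.rotate_cons_succ, List.rotate_zero, ZC.pw_zip, hz]
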